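/- For every ε > 0 there exists a constant C > 0 such that the following holds for every integer q > 1: if x, y, z ∈ ℤ³ are linearly independent vectors with all coordinates in [0,q], and Λ ∈ M_{3,3}(ℤ) is the Gram matrix of (x,y,z), then the number of triples (x',y',z') ∈ (ℤ³)³ whose Gram matrix equals Λ is at most C · q^{ε} · gcd(Λ_{1,1}, Λ_{2,2}). -/

import Mathlib

open Matrix

theorem succ_le_mul_rpow {ε : ℝ} (hε : 0 < ε) {p : ℕ} (hp : 2 ≤ p) (e : ℕ) :
    (e : ℝ) + 1 ≤ max 1 (1 / (ε * Real.log 2)) * ((p : ℝ) ^ e) ^ ε := by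
  have hlog : 0 < Real.log 2 := Real.log_pos (by norm_num)
  have h2 : (1 : ℝ) + e * (ε * Real.log 2) ≤ ((p : ℝ) ^ e) ^ ε := by
    calc (1 : ℝ) + e * (ε * Real.log 2) ≤ Real.exp (e * (ε * Real.log 2)) := by
          linarith [Real.add_one_le_exp (e * (ε * Real.log 2))]
      _ = ((2 : ℝ) ^ e) ^ ε := by
          rw [Real.rpow_def_of_pos (by positivity), Real.log_pow]
          congr 1
          ring
      _ ≤ ((p : ℝ) ^ e) ^ ε := by
          have : (2 : ℝ) ≤ p := by exact_mod_cast hp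
          gcongr
  set B := max 1 (1 / (ε * Real.log 2)) with hB
  have hB1 : 1 ≤ B := le_max_left _ _
  have hB2 : 1 ≤ B * (ε * Real.log 2) := by
    have := le_max_right 1 (1 / (ε * Real.log 2))
    rwa [← hB, div_le_iff₀ (by positivity)] at this
  calc (e : ℝ) + 1 ≤ B * (1 + e * (ε * Real.log 2)) := by
        nlinarith [Nat.cast_nonneg (α := ℝ) e]
    _ ≤ _ := by gcongr

/-- The divisor bound. -/
theorem exists_card_divisors_le_rpow {ε : ℝ} (hε : 0 < ε) :
    ∃ C : ℝ, 1 ≤ C ∧ ∀ n : ℕ, n ≠ 0 → (n.divisors.card : ℝ) ≤ C * (n : ℝ) ^ ε := by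
  set B := max 1 (1 / (ε * Real.log 2)) with hB
  have hB1 : 1 ≤ B := le_max_left _ _
  obtain ⟨K, hK⟩ := exists_nat_ge ((2 : ℝ) ^ (1 / ε))
  refine ⟨B ^ K, one_le_pow₀ hB1, fun n hn => ?_⟩
  have hlocal : ∀ p ∈ n.primeFactors, ((n.factorization p + 1 : ℕ) : ℝ) ≤
      (if p < K then B else 1) * ((p : ℝ) ^ (n.factorization p)) ^ ε := by
    intro p hp
    have hp2 := (Nat.prime_of_mem_primeFactors hp).two_le
    push_cast
    split_ifs with h
    · exact succ_le_mul_rpow hε hp2 _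
    · have h1 : (2 : ℝ) ≤ (p : ℝ) ^ ε := by
        have h3 : (2 : ℝ) ^ (1 / ε) ≤ p := hK.trans (by exact_mod_cast not_lt.mp h)
        calc (2 : ℝ) = ((2 : ℝ) ^ (1 / ε)) ^ ε := by
              rw [← Real.rpow_mul (by norm_num), one_div_mul_cancel hε.ne', Real.rpow_one]
          _ ≤ _ := by gcongr
      rw [one_mul, ← Real.rpow_natCast, ← Real.rpow_mul (by positivity), mul_comm (_ : ℝ) ε,
        Real.rpow_mul (by positivity), Real.rpow_natCast]
      calc ((n.factorization p : ℝ)) + 1 ≤ (2 : ℝ) ^ (n.factorization p) := by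
            exact_mod_cast Nat.lt_two_pow_self
        _ ≤ _ := by gcongr
  rw [Nat.card_divisors hn]
  push_cast at hlocal ⊢
  refine (Finset.prod_le_prod (fun _ _ => by positivity) hlocal).trans ?_
  rw [Finset.prod_mul_distrib, Real.finsetProd_rpow _ _ (fun _ _ => by positivity)]
  have hprod : ∏ p ∈ n.primeFactors, (p : ℝ) ^ n.factorization p = n := by
    have := Nat.prod_factorization_pow_eq_self hn
    rw [Finsupp.prod, Nat.support_factorization] at this
    exact_mod_cast this
  rw [hprod]
  gcongr
  rw [← Finset.prod_filter, Finset.prod_const]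
  refine pow_le_pow_right₀ hB1 ?_
  calc _ ≤ (Finset.range K).card := Finset.card_le_card (fun p hp => by
        simp only [Finset.mem_filter, Finset.mem_range] at hp ⊢; exact hp.2)
    _ = K := Finset.card_range K

/-- Square roots of `a` modulo `N` are nearly determined by the common divisor with `N` of their
sum with a fixed square root. -/
theorem dvd_sub_sq_of_gcd_eq {N a l l' l₀ : ℤ} (h : N ∣ l ^ 2 - a) (h' : N ∣ l' ^ 2 - a)
    (h₀ : N ∣ l₀ ^ 2 - a) (hd : Int.gcd N (l + l₀) = Int.gcd N (l' + l₀)) :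
    N ∣ (l - l') ^ 2 ∧ N ∣ 2 * l * (l - l') := by
  have key : ∀ m : ℤ, N ∣ m ^ 2 - a → N ∣ (Int.gcd N (m + l₀) : ℤ) * (m - l₀) := by
    intro m hm
    obtain ⟨r, hr⟩ := dvd_sub hm h₀
    rw [Int.gcd_eq_gcd_ab]
    exact ⟨Int.gcdA N (m + l₀) * (m - l₀) + Int.gcdB N (m + l₀) * r, by
      linear_combination Int.gcdB N (m + l₀) * hr⟩
  have h1 : N ∣ (Int.gcd N (l + l₀) : ℤ) * (l - l') := by
    obtain ⟨r, hr⟩ := dvd_sub (key l h) (hd ▸ key l' h')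
    exact ⟨r, by linear_combination hr⟩
  have h2 : (Int.gcd N (l + l₀) : ℤ) ∣ l - l' := by
    obtain ⟨r, hr⟩ := dvd_sub (Int.gcd_dvd_right N (l + l₀)) (hd ▸ Int.gcd_dvd_right N (l' + l₀))
    exact ⟨r, by linear_combination hr⟩
  have h3 : N ∣ (l - l') ^ 2 := by
    obtain ⟨k, hk⟩ := h2
    obtain ⟨r, hr⟩ := h1
    exact ⟨r * k, by linear_combination (l - l') * hk + k * hr⟩
  refine ⟨h3, ?_⟩
  obtain ⟨r, hr⟩ := dvd_add h3 (dvd_sub h h')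
  exact ⟨r, by linear_combination hr⟩

theorem card_le_of_sq_add_sq_eq_of_isCoprime {b : ℕ} (hb : b ≠ 0) (S : Finset (ℤ × ℤ))
    (hS : ∀ z ∈ S, z.1 ^ 2 + z.2 ^ 2 = (b : ℤ)) (hco : ∀ z ∈ S, IsCoprime z.1 z.2) :
    S.card ≤ 25 * b.divisors.card := by
  have hroot : ∀ z ∈ S, ∃ l : ℤ, (b : ℤ) ∣ z.1 - l * z.2 ∧ (b : ℤ) ∣ l ^ 2 - (-1) := by
    intro z hz
    have h1 := hS z hz
    have hc : IsCoprime z.2 (b : ℤ) := by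
      rw [← h1]
      have : IsCoprime z.2 (z.1 ^ 2) := (hco z hz).symm.pow_right
      rw [sq z.2]
      exact this.add_mul_left_right z.2
    obtain ⟨u, v, huv⟩ := hc
    refine ⟨z.1 * u, ⟨z.1 * v, by linear_combination -z.1 * huv⟩,
      ⟨u ^ 2 + 2 * v - (b : ℤ) * v ^ 2, ?_⟩⟩
    linear_combination u ^ 2 * h1 - (u * z.2 + 1 - (b : ℤ) * v) * huv
  choose! l hl1 hl2 using hroot
  rcases S.eq_empty_or_nonempty with rfl | ⟨z₀, hz₀⟩
  · simp
  refine Finset.card_le_mul_card_image_of_maps_to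
    (f := fun z => Int.gcd b (l z + l z₀)) (fun z hz => ?_) 25 (fun d hd => ?_)
  · rw [Nat.mem_divisors]
    refine ⟨?_, hb⟩
    have := Int.gcd_dvd_left (b : ℤ) (l z + l z₀)
    exact_mod_cast this
  · set F := S.filter (fun z => Int.gcd b (l z + l z₀) = d) with hF
    rcases F.eq_empty_or_nonempty with h | ⟨z₁, hz₁⟩
    · rw [h]; simp
    have hb' : (0 : ℤ) < b := by positivity
    have hz₁' := (Finset.mem_filter.mp hz₁)
    have hint : ∀ z ∈ F, (b : ℤ) ∣ 2 * (z.1 * z₁.1 + z.2 * z₁.2) ∧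
        (b : ℤ) ∣ 2 * (z.1 * z₁.2 - z.2 * z₁.1) := by
      intro z hz
      have hz' := Finset.mem_filter.mp hz
      obtain ⟨h1, h2⟩ := dvd_sub_sq_of_gcd_eq (hl2 z hz'.1) (hl2 z₁ hz₁'.1) (hl2 z₀ hz₀)
        (hz'.2.trans hz₁'.2.symm)
      obtain ⟨r1, e1⟩ := h1
      obtain ⟨r2, e2⟩ := h2
      obtain ⟨s, es⟩ := hl1 z hz'.1
      obtain ⟨s1, es1⟩ := hl1 z₁ hz₁'.1
      obtain ⟨t, et⟩ := hl2 z hz'.1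
      obtain ⟨t1, et1⟩ := hl2 z₁ hz₁'.1
      have ex : z.1 = l z * z.2 + b * s := by linarith
      have ex1 : z₁.1 = l z₁ * z₁.2 + b * s1 := by linarith
      constructor
      · refine ⟨2 * (l z * z.2 * s1 + s * z₁.1) + z.2 * z₁.2 * (t + t1 - r1), ?_⟩
        rw [ex, ex1]
        linear_combination z.2 * z₁.2 * (et + et1 - e1)
      · have h3 : (b : ℤ) ∣ 2 * (l z - l z₁) := by
          refine ⟨2 * t * (l z - l z₁) - l z * r2, ?_⟩
          linear_combination 2 * (l z - l z₁) * et - l z * e2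
        obtain ⟨r3, e3⟩ := h3
        refine ⟨z.2 * z₁.2 * r3 + 2 * (s * z₁.2 - z.2 * s1), ?_⟩
        rw [ex, ex1]
        linear_combination z.2 * z₁.2 * e3
    have hbox : ((Finset.Icc (-2 : ℤ) 2) ×ˢ (Finset.Icc (-2 : ℤ) 2)).card = 25 := by decide
    rw [← hbox]
    have hz₁n := hS z₁ hz₁'.1
    refine Finset.card_le_card_of_injOn
      (fun z => (2 * (z.1 * z₁.1 + z.2 * z₁.2) / b, 2 * (z.1 * z₁.2 - z.2 * z₁.1) / b)) ?_ ?_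
    · intro z hz
      have hzn := hS z (Finset.mem_filter.mp hz).1
      obtain ⟨⟨u, hu⟩, ⟨v, hv⟩⟩ := hint z hz
      have huv : u ^ 2 + v ^ 2 = 4 := by
        have : (b : ℤ) ^ 2 * (u ^ 2 + v ^ 2) = b ^ 2 * 4 := by
          calc (b : ℤ) ^ 2 * (u ^ 2 + v ^ 2) = (b * u) ^ 2 + (b * v) ^ 2 := by ring
            _ = 4 * ((z.1 ^ 2 + z.2 ^ 2) * (z₁.1 ^ 2 + z₁.2 ^ 2)) := by rw [← hu, ← hv]; ring
            _ = _ := by rw [hzn, hz₁n]; ring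
        exact mul_left_cancel₀ (by positivity) this
      simp only [hu, hv, Int.mul_ediv_cancel_left _ hb'.ne', Finset.coe_product, Set.mem_prod,
        Finset.coe_Icc, Set.mem_Icc]
      refine ⟨⟨?_, ?_⟩, ?_, ?_⟩ <;> nlinarith
    · intro z hz w hw hzw
      obtain ⟨⟨u, hu⟩, ⟨v, hv⟩⟩ := hint z hz
      obtain ⟨⟨u', hu'⟩, ⟨v', hv'⟩⟩ := hint w hw
      simp only [hu, hv, hu', hv', Int.mul_ediv_cancel_left _ hb'.ne', Prod.mk.injEq] at hzw
      obtain ⟨rfl, rfl⟩ := hzw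
      have e1 := hu.trans hu'.symm
      have e2 := hv.trans hv'.symm
      have hb2 : (2 * b : ℤ) ≠ 0 := by positivity
      ext
      · refine mul_left_cancel₀ hb2 ?_
        rw [← hz₁n]
        linear_combination z₁.1 * e1 + z₁.2 * e2
      · refine mul_left_cancel₀ hb2 ?_
        rw [← hz₁n]
        linear_combination z₁.2 * e1 - z₁.1 * e2

theorem card_le_of_sq_add_sq_eq {b : ℕ} (hb : b ≠ 0) (S : Finset (ℤ × ℤ))
    (hS : ∀ z ∈ S, z.1 ^ 2 + z.2 ^ 2 = (b : ℤ)) :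
    S.card ≤ 25 * b.divisors.card * b.divisors.card := by
  have hmul : ∀ z : ℤ × ℤ, ∃ w : ℤ × ℤ, z.1 = Int.gcd z.1 z.2 * w.1 ∧
      z.2 = Int.gcd z.1 z.2 * w.2 := fun z =>
    ⟨(z.1 / Int.gcd z.1 z.2, z.2 / Int.gcd z.1 z.2),
      (Int.mul_ediv_cancel' (Int.gcd_dvd_left _ _)).symm,
      (Int.mul_ediv_cancel' (Int.gcd_dvd_right _ _)).symm⟩
  choose w hw1 hw2 using hmul
  have hsq : ∀ z ∈ S, (Int.gcd z.1 z.2 : ℤ) ^ 2 * ((w z).1 ^ 2 + (w z).2 ^ 2) = b := by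
    intro z hz
    linear_combination hS z hz - (z.1 + Int.gcd z.1 z.2 * (w z).1) * hw1 z -
      (z.2 + Int.gcd z.1 z.2 * (w z).2) * hw2 z
  have hdvd : ∀ z ∈ S, (Int.gcd z.1 z.2) ^ 2 ∣ b := by
    intro z hz
    have : ((Int.gcd z.1 z.2 : ℤ)) ^ 2 ∣ b := ⟨_, (hsq z hz).symm⟩
    exact_mod_cast this
  refine Finset.card_le_mul_card_image_of_maps_to
    (f := fun z => Int.gcd z.1 z.2) (fun z hz => ?_) _ (fun d hd => ?_)
  · rw [Nat.mem_divisors]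
    exact ⟨(dvd_pow_self _ two_ne_zero).trans (hdvd z hz), hb⟩
  · set F := S.filter (fun z => Int.gcd z.1 z.2 = d) with hF
    rcases F.eq_empty_or_nonempty with h | ⟨z₁, hz₁⟩
    · rw [h]; simp
    have hmem : ∀ z ∈ F, z ∈ S ∧ Int.gcd z.1 z.2 = d := fun z hz => Finset.mem_filter.mp hz
    obtain ⟨b', hb'⟩ : d ^ 2 ∣ b := (hmem z₁ hz₁).2 ▸ hdvd z₁ (hmem z₁ hz₁).1
    have hb'0 : b' ≠ 0 := by rintro rfl; simp at hb'; exact hb hb'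
    have hd0 : d ≠ 0 := by rintro rfl; simp at hb'; exact hb hb'
    have hinj : Set.InjOn w F := by
      intro z hz z' hz' h
      ext
      · rw [hw1 z, hw1 z', (hmem z hz).2, (hmem z' hz').2, h]
      · rw [hw2 z, hw2 z', (hmem z hz).2, (hmem z' hz').2, h]
    rw [← Finset.card_image_of_injOn hinj]
    refine (card_le_of_sq_add_sq_eq_of_isCoprime hb'0 _ ?_ ?_).trans ?_
    · intro y hy
      obtain ⟨z, hz, rfl⟩ := Finset.mem_image.mp hy
      have := hsq z (hmem z hz).1
      rw [(hmem z hz).2, hb'] at this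
      push_cast at this
      exact mul_left_cancel₀ (by positivity) this
    · intro y hy
      obtain ⟨z, hz, rfl⟩ := Finset.mem_image.mp hy
      have hd' : (d : ℤ) ≠ 0 := by exact_mod_cast hd0
      have e1 := hw1 z
      have e2 := hw2 z
      have eg := Int.gcd_eq_gcd_ab z.1 z.2
      rw [(hmem z hz).2] at e1 e2 eg
      refine ⟨Int.gcdA z.1 z.2, Int.gcdB z.1 z.2, mul_left_cancel₀ hd' ?_⟩
      linear_combination -eg - Int.gcdA z.1 z.2 * e1 - Int.gcdB z.1 z.2 * e2
    · have : b'.divisors ⊆ b.divisors := Nat.divisors_subset_of_dvd hb ⟨d ^ 2, by rw [hb']; ring⟩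
      gcongr

open scoped Quaternion

/-- Few integral quaternions have a given norm. -/
theorem exists_card_normSq_eq_le_rpow {ε : ℝ} (hε : 0 < ε) :
    ∃ C : ℝ, 1 ≤ C ∧ ∀ (a : ℕ), a ≠ 0 → ∀ S : Finset ℍ[ℤ],
      (∀ t ∈ S, Quaternion.normSq t = (a : ℤ)) → (S.card : ℝ) ≤ C * a * (a : ℝ) ^ ε := by
  obtain ⟨C, hC1, hC⟩ := exists_card_divisors_le_rpow (half_pos hε)
  refine ⟨9 * (25 * C * C), by nlinarith, fun a ha S hS => ?_⟩
  have hsum : ∀ t ∈ S, t.re ^ 2 + t.imI ^ 2 + t.imJ ^ 2 + t.imK ^ 2 = (a : ℤ) := by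
    intro t ht
    rw [← hS t ht, Quaternion.normSq_def']
  set D := (Finset.Icc 1 a).sup (fun b => b.divisors.card) with hD
  have hDa : (D : ℝ) ≤ C * (a : ℝ) ^ (ε / 2) := by
    obtain ⟨b, hb, hbD⟩ := Finset.exists_mem_eq_sup (Finset.Icc 1 a)
      ⟨1, by simp; omega⟩ (fun b => b.divisors.card)
    rw [hD, hbD]
    rw [Finset.mem_Icc] at hb
    refine (hC b (by omega)).trans ?_
    have : (b : ℝ) ≤ a := by exact_mod_cast hb.2
    gcongr
  have hD1 : 1 ≤ D := by
    have := Finset.le_sup (f := fun b : ℕ => b.divisors.card)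
      (show 1 ∈ Finset.Icc 1 a by simp; omega)
    rwa [Nat.divisors_one, Finset.card_singleton] at this
  have hcard : S.card ≤ 25 * D * D * (((Finset.Icc (-(a.sqrt : ℤ)) a.sqrt) ×ˢ
      (Finset.Icc (-(a.sqrt : ℤ)) a.sqrt)).card) := by
    refine Finset.card_le_mul_card_image_of_maps_to
      (f := fun t => (t.re, t.imI)) (fun t ht => ?_) _ (fun p hp => ?_)
    · have h := hsum t ht
      have hs : ∀ r : ℤ, r ^ 2 ≤ a → -(a.sqrt : ℤ) ≤ r ∧ r ≤ a.sqrt := by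
        intro r hr
        rw [← abs_le, Int.abs_eq_natAbs]
        have : r.natAbs ≤ a.sqrt := by
          rw [Nat.le_sqrt']
          zify
          rwa [sq_abs]
        exact_mod_cast this
      simp only [Finset.mem_product, Finset.mem_Icc]
      refine ⟨hs _ ?_, hs _ ?_⟩ <;> nlinarith [sq_nonneg t.re, sq_nonneg t.imI,
        sq_nonneg t.imJ, sq_nonneg t.imK]
    · set F := S.filter (fun t => (t.re, t.imI) = p) with hF
      have hmem : ∀ t ∈ F, t ∈ S ∧ t.re = p.1 ∧ t.imI = p.2 := fun t ht => by
        have := Finset.mem_filter.mp ht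
        exact ⟨this.1, congrArg Prod.fst this.2, congrArg Prod.snd this.2⟩
      have hinj : Set.InjOn (fun t : ℍ[ℤ] => (t.imJ, t.imK)) F := by
        intro t ht t' ht' h
        simp only [Prod.mk.injEq] at h
        ext
        · rw [(hmem t ht).2.1, (hmem t' ht').2.1]
        · rw [(hmem t ht).2.2, (hmem t' ht').2.2]
        · exact h.1
        · exact h.2
      rcases F.eq_empty_or_nonempty with h | ⟨t₁, ht₁⟩
      · rw [h]; simp
      have hb : ∀ t ∈ F, t.imJ ^ 2 + t.imK ^ 2 = (a : ℤ) - p.1 ^ 2 - p.2 ^ 2 := by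
        intro t ht
        have h1 := hsum t (hmem t ht).1
        rw [(hmem t ht).2.1, (hmem t ht).2.2] at h1
        linarith
      rw [← Finset.card_image_of_injOn hinj]
      obtain ⟨b, hbe⟩ := Int.eq_ofNat_of_zero_le
        (show 0 ≤ (a : ℤ) - p.1 ^ 2 - p.2 ^ 2 by rw [← hb t₁ ht₁]; positivity)
      have hS' : ∀ z ∈ F.image (fun t : ℍ[ℤ] => (t.imJ, t.imK)), z.1 ^ 2 + z.2 ^ 2 = (b : ℤ) := by
        intro z hz
        obtain ⟨t, ht, rfl⟩ := Finset.mem_image.mp hz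
        exact (hb t ht).trans hbe
      rcases eq_or_ne b 0 with rfl | hb0
      · have hsub : F.image (fun t : ℍ[ℤ] => (t.imJ, t.imK)) ⊆ {(0, 0)} := by
          intro z hz
          have := hS' z hz
          push_cast at this
          rw [Finset.mem_singleton]
          ext
          · exact pow_eq_zero_iff two_ne_zero |>.mp (by nlinarith [sq_nonneg z.1, sq_nonneg z.2])
          · exact pow_eq_zero_iff two_ne_zero |>.mp (by nlinarith [sq_nonneg z.1, sq_nonneg z.2])
        refine (Finset.card_le_card hsub).trans ?_
        rw [Finset.card_singleton]
        nlinarith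
      · refine (card_le_of_sq_add_sq_eq hb0 _ hS').trans ?_
        have hba : b ≤ a := by
          have : (b : ℤ) ≤ a := by rw [← hbe]; nlinarith [sq_nonneg p.1, sq_nonneg p.2]
          exact_mod_cast this
        have : b.divisors.card ≤ D := Finset.le_sup (f := fun b : ℕ => b.divisors.card)
          (show b ∈ Finset.Icc 1 a by rw [Finset.mem_Icc]; omega)
        gcongr
  have hbox : ((Finset.Icc (-(a.sqrt : ℤ)) a.sqrt) ×ˢ
      (Finset.Icc (-(a.sqrt : ℤ)) a.sqrt)).card ≤ 9 * a := by
    rw [Finset.card_product, Int.card_Icc]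
    have h1 : ((a.sqrt : ℤ) + 1 - -(a.sqrt : ℤ)).toNat = 2 * a.sqrt + 1 := by omega
    rw [h1]
    have h2 : 1 ≤ a.sqrt := Nat.le_sqrt'.mpr (by omega)
    have h3 := Nat.sqrt_le' a
    nlinarith
  have hfin : (S.card : ℝ) ≤ 25 * D * D * (9 * a) := by
    exact_mod_cast hcard.trans (Nat.mul_le_mul_left _ hbox)
  have ha0 : (0 : ℝ) < a := by positivity
  calc (S.card : ℝ) ≤ 25 * D * D * (9 * a) := hfin
    _ ≤ 25 * (C * (a : ℝ) ^ (ε / 2)) * (C * (a : ℝ) ^ (ε / 2)) * (9 * a) := by gcongr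
    _ = 9 * (25 * C * C) * a * ((a : ℝ) ^ (ε / 2) * (a : ℝ) ^ (ε / 2)) := by ring
    _ = _ := by rw [← Real.rpow_add ha0, add_halves]
namespace Quaternion

section CommRing

variable {R : Type*} [CommRing R]

theorem smul_mul_eq_of_mul_mul_star_eq_zero {q x h : ℍ[R]} (hh : (h * q).re = 1)
    (hN : q * star q = 0) (hx : q * x * star q = 0) :
    (2 : R) • (q * x) = (2 * (x * h * q).re) • q := by
  have h1 := self_add_star' (h * q)
  have h2 := self_add_star' (x * h * q)
  rw [hh, mul_one] at h1
  calc (2 : R) • (q * x) = q * x * (h * q + star (h * q)) := by rw [h1, mul_coe_eq_smul]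
    _ = q * (x * h * q) + q * x * star q * star h := by
        rw [star_mul, mul_add]; simp only [mul_assoc]
    _ = q * (x * h * q + star (x * h * q)) - q * star q * star (x * h) +
          q * x * star q * star h := by
        rw [star_mul (x * h) q, mul_add]; simp only [mul_assoc]; abel
    _ = (2 * (x * h * q).re) • q := by
        rw [hN, hx, h2, mul_coe_eq_smul]; simp

theorem eq_zero_of_smul_eq_zero {q h : ℍ[R]} (hh : (h * q).re = 1) {r : R} (hr : r • q = 0) :
    r = 0 := by
  have : (h * (r • q)).re = r := by rw [mul_smul_comm, re_smul, hh, smul_eq_mul, mul_one]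
  rw [← this, hr, mul_zero, re_zero]

theorem normSq_commutator_eq_zero {q x y h : ℍ[R]} (hh : (h * q).re = 1) {l m : R}
    (hx : q * x = l • q) (hy : q * y = m • q) : normSq (x * y - y * x) = 0 := by
  have h0 : q * (x * y - y * x) = 0 := by
    rw [mul_sub, ← mul_assoc, ← mul_assoc, hx, hy, smul_mul_assoc, smul_mul_assoc, hx, hy,
      smul_smul, smul_smul, mul_comm, sub_self]
  refine eq_zero_of_smul_eq_zero hh ?_
  rw [← mul_coe_eq_smul, ← self_mul_star, ← mul_assoc, h0, zero_mul]

theorem sq_add_eq_zero_of_mul_eq_smul {q x h : ℍ[R]} (hh : (h * q).re = 1) {l n : R}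
    (hx : q * x = l • q) (hn : x * x = -(n : ℍ[R])) : l ^ 2 + n = 0 := by
  refine eq_zero_of_smul_eq_zero hh ?_
  have h1 : q * (x * x) = (l ^ 2) • q := by
    rw [← mul_assoc, hx, smul_mul_assoc, hx, smul_smul, sq]
  rw [add_smul, ← h1, hn, mul_neg, mul_coe_eq_smul, neg_add_cancel]

theorem add_smul_mul_star_eq_zero {q q' x : ℍ[R]} {l l' : R} (hx : q * x = l • q)
    (hx' : q' * x = l' • q') (hs : star x = -x) : (l + l') • (q * star q') = 0 := by
  have h1 : x * star q' = -(l' • star q') := by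
    have := congrArg star hx'
    rw [star_mul, hs, star_smul, neg_mul] at this
    rw [← this, neg_neg]
  have h2 : l • (q * star q') = -(l' • (q * star q')) := by
    rw [← smul_mul_assoc, ← hx, mul_assoc, h1, mul_neg, mul_smul_comm]
  rw [add_smul, h2, neg_add_cancel]

theorem two_smul_mul_star_eq_zero {q q' u h : ℍ[R]} (hh : (h * q').re = 1)
    (hq : q * star q' = 0) (hu : u * star q' = 0) : (2 : R) • (q * star u) = 0 := by
  have h1 := self_add_star' (h * q')
  rw [hh, mul_one] at h1
  have h2 : q' * star u = 0 := by
    have := congrArg star hu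
    rwa [star_mul, star_star, star_zero] at this
  calc (2 : R) • (q * star u) = q * (h * q' + star (h * q')) * star u := by
        rw [h1, mul_coe_eq_smul, smul_mul_assoc]
    _ = q * h * (q' * star u) + q * star q' * star h * star u := by
        rw [star_mul, mul_add, add_mul]; simp only [mul_assoc]
    _ = 0 := by rw [hq, h2]; simp

/-- The quaternion with given coordinates. -/
def ofCoords (a b c d : R) : ℍ[R] := ⟨a, b, c, d⟩

@[simp] theorem re_ofCoords (a b c d : R) : (ofCoords a b c d).re = a := rfl
@[simp] theorem imI_ofCoords (a b c d : R) : (ofCoords a b c d).imI = b := rfl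
@[simp] theorem imJ_ofCoords (a b c d : R) : (ofCoords a b c d).imJ = c := rfl
@[simp] theorem imK_ofCoords (a b c d : R) : (ofCoords a b c d).imK = d := rfl

/-- An explicit intertwiner of two pairs of pure quaternions with the same Gram matrix. -/
def intertwiner (n D : R) (x w x' w' h : ℍ[R]) : ℍ[R] :=
  (n * D) • h - D • (x' * h * x) - (w' * x') * h * (w * x) - n • (w' * h * w)

theorem intertwiner_mul {n D : R} {x w x' w' : ℍ[R]} (hx : x * x = -(n : ℍ[R]))
    (hx' : x' * x' = -(n : ℍ[R])) (hw' : x' * w' = -(w' * x')) (h : ℍ[R]) :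
    intertwiner n D x w x' w' h * x = x' * intertwiner n D x w x' w' h := by
  have e1 : x' * ((w' * x') * h * (w * x)) = n • (w' * h * (w * x)) := by
    calc _ = (x' * w') * x' * h * (w * x) := by simp only [mul_assoc]
      _ = -(w' * (x' * x') * h * (w * x)) := by rw [hw']; simp only [mul_assoc, neg_mul]
      _ = _ := by rw [hx', mul_neg, mul_coe_eq_smul]; simp only [neg_mul, neg_neg, smul_mul_assoc]
  have e2 : ((w' * x') * h * (w * x)) * x = -(n • ((w' * x') * h * w)) := by
    calc _ = (w' * x') * h * w * (x * x) := by simp only [mul_assoc]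
      _ = _ := by rw [hx, mul_neg, mul_coe_eq_smul]
  have e3 : x' * (x' * h * x) = -(n • (h * x)) := by
    rw [← mul_assoc, ← mul_assoc, hx', neg_mul, coe_mul_eq_smul, neg_mul, smul_mul_assoc]
  have e4 : x' * h * x * x = -(n • (x' * h)) := by
    rw [mul_assoc, hx, mul_neg, mul_coe_eq_smul]
  have e5 : x' * (w' * h * w) = -(w' * x' * h * w) := by
    rw [← mul_assoc, ← mul_assoc, hw', neg_mul, neg_mul]
  have e6 : w' * h * w * x = w' * h * (w * x) := mul_assoc _ _ _
  simp only [intertwiner, sub_mul, mul_sub, smul_mul_assoc, mul_smul_comm, e1, e2, e3, e4, e5, e6]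
  module

theorem intertwiner_mul' {n D : R} {x w x' w' : ℍ[R]} (hww : w * w = -(D : ℍ[R]))
    (hww' : w' * w' = -(D : ℍ[R])) (hw : x * w = -(w * x)) (h : ℍ[R]) :
    intertwiner n D x w x' w' h * w = w' * intertwiner n D x w x' w' h := by
  have e1 : w' * ((w' * x') * h * (w * x)) = -(D • (x' * h * (w * x))) := by
    calc _ = (w' * w') * x' * h * (w * x) := by simp only [mul_assoc]
      _ = _ := by rw [hww', neg_mul, coe_mul_eq_smul]; simp only [neg_mul, smul_mul_assoc]
  have e2 : ((w' * x') * h * (w * x)) * w = D • ((w' * x') * h * x) := by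
    calc _ = (w' * x') * h * w * (x * w) := by simp only [mul_assoc]
      _ = -((w' * x') * h * (w * w) * x) := by rw [hw]; simp only [mul_assoc, mul_neg]
      _ = _ := by rw [hww, mul_neg, mul_coe_eq_smul, neg_mul, neg_neg, smul_mul_assoc]
  have e3 : w' * (x' * h * x) = w' * x' * h * x := by simp only [mul_assoc]
  have e4 : x' * h * x * w = -(x' * h * (w * x)) := by rw [mul_assoc, hw, mul_neg]
  have e5 : w' * (w' * h * w) = -(D • (h * w)) := by
    rw [← mul_assoc, ← mul_assoc, hww', neg_mul, coe_mul_eq_smul, neg_mul, smul_mul_assoc]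
  have e6 : w' * h * w * w = -(D • (w' * h)) := by rw [mul_assoc, hww, mul_neg, mul_coe_eq_smul]
  simp only [intertwiner, sub_mul, mul_sub, smul_mul_assoc, mul_smul_comm, e1, e2, e3, e4, e5, e6]
  module

/-- The trace of `h ↦ a * h * b`. -/
theorem trace_mul_mul (a b : ℍ[R]) :
    (a * ofCoords 1 0 0 0 * b).re + (a * ofCoords 0 1 0 0 * b).imI +
      (a * ofCoords 0 0 1 0 * b).imJ + (a * ofCoords 0 0 0 1 * b).imK = 4 * a.re * b.re := by
  simp
  ring

theorem exists_intertwiner_ne_zero {n D : R} (hnD : 4 * (n * D) ≠ 0) {x w : ℍ[R]} (x' w' : ℍ[R])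
    (hx : x.re = 0) (hw : w.re = 0) (hwx : (w * x).re = 0) :
    ∃ h, intertwiner n D x w x' w' h ≠ 0 := by
  by_contra! H
  refine hnD ?_
  have t1 := trace_mul_mul x' x
  have t2 := trace_mul_mul (w' * x') (w * x)
  have t3 := trace_mul_mul w' w
  rw [hx] at t1
  rw [hwx] at t2
  rw [hw] at t3
  have h1 := congrArg (fun q => q.re) (H (ofCoords 1 0 0 0))
  have h2 := congrArg (fun q => q.imI) (H (ofCoords 0 1 0 0))
  have h3 := congrArg (fun q => q.imJ) (H (ofCoords 0 0 1 0))
  have h4 := congrArg (fun q => q.imK) (H (ofCoords 0 0 0 1))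
  simp only [intertwiner, re_sub, imI_sub, imJ_sub, imK_sub, re_smul, imI_smul, imJ_smul,
    imK_smul, smul_eq_mul, re_zero, imI_zero, imJ_zero, imK_zero, re_ofCoords,
    imI_ofCoords, imJ_ofCoords, imK_ofCoords] at h1 h2 h3 h4
  linear_combination h1 + h2 + h3 + h4 + D * t1 + t2 + n * t3

end CommRing

/-- Reduction of integral quaternions modulo `N`. -/
def modHom (N : ℕ) : ℍ[ℤ] →+* ℍ[ZMod N] where
  toFun q := ofCoords (q.re : ZMod N) q.imI q.imJ q.imK
  map_one' := by ext <;> simp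
  map_zero' := by ext <;> simp
  map_mul' a b := by ext <;> simp
  map_add' a b := by ext <;> simp

@[simp] theorem re_modHom (N : ℕ) (q : ℍ[ℤ]) : (modHom N q).re = (q.re : ZMod N) := rfl
@[simp] theorem imI_modHom (N : ℕ) (q : ℍ[ℤ]) : (modHom N q).imI = (q.imI : ZMod N) := rfl
@[simp] theorem imJ_modHom (N : ℕ) (q : ℍ[ℤ]) : (modHom N q).imJ = (q.imJ : ZMod N) := rfl
@[simp] theorem imK_modHom (N : ℕ) (q : ℍ[ℤ]) : (modHom N q).imK = (q.imK : ZMod N) := rfl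

theorem modHom_star (N : ℕ) (q : ℍ[ℤ]) : modHom N (star q) = star (modHom N q) := by
  ext <;> simp

theorem modHom_smul (N : ℕ) (r : ℤ) (q : ℍ[ℤ]) :
    modHom N (r • q) = (r : ZMod N) • modHom N q := by
  ext <;> simp

theorem modHom_coe (N : ℕ) (r : ℤ) : modHom N (r : ℍ[ℤ]) = ((r : ZMod N) : ℍ[ZMod N]) := by
  ext <;> simp

theorem normSq_modHom (N : ℕ) (q : ℍ[ℤ]) : normSq (modHom N q) = ((normSq q : ℤ) : ZMod N) := by
  simp [normSq_def']

theorem modHom_eq_zero_iff_dvd {N : ℕ} {q : ℍ[ℤ]} : modHom N q = 0 ↔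
    (N : ℤ) ∣ q.re ∧ (N : ℤ) ∣ q.imI ∧ (N : ℤ) ∣ q.imJ ∧ (N : ℤ) ∣ q.imK := by
  simp [Quaternion.ext_iff, ZMod.intCast_zmod_eq_zero_iff_dvd]

theorem modHom_eq_zero_of_gcd_smul {N g : ℕ} (hN : N ≠ 0) {q : ℍ[ℤ]}
    (h : modHom N ((g : ℤ) • q) = 0) : modHom (N / N.gcd g) q = 0 := by
  have key : ∀ z : ℤ, (N : ℤ) ∣ (g : ℤ) * z → ((N / N.gcd g : ℕ) : ℤ) ∣ z := by
    intro z hz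
    have hz' := Int.natAbs_dvd_natAbs.mpr hz
    rw [Int.natAbs_mul, Int.natAbs_natCast, Int.natAbs_natCast] at hz'
    rw [Int.natCast_dvd]
    have hpos : 0 < N.gcd g := Nat.gcd_pos_of_pos_left _ (Nat.pos_of_ne_zero hN)
    refine (Nat.coprime_div_gcd_div_gcd hpos).dvd_of_dvd_mul_left ?_
    rw [Nat.div_mul_right_comm (Nat.gcd_dvd_right N g)]
    exact Nat.div_dvd_div (Nat.gcd_dvd_left N g) hz'
  simp only [modHom_eq_zero_iff_dvd, re_smul, imI_smul, imJ_smul, imK_smul, smul_eq_mul] at h ⊢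
  exact ⟨key _ h.1, key _ h.2.1, key _ h.2.2.1, key _ h.2.2.2⟩

theorem _root_.ZMod.isUnit_two_of_odd {N : ℕ} (hN : Odd N) :
    IsUnit (2 : ZMod N) := by
  have := (ZMod.isUnit_iff_coprime 2 N).mpr (by simpa using hN)
  exact_mod_cast this


theorem not_eight_dvd_normSq {q h : ℍ[ℤ]} (hh : (h * q).re = 1) : ¬ (8 : ℤ) ∣ normSq q := by
  intro h8
  have sq_mod : ∀ a : ℤ,
      a ^ 2 % 8 = 1 ∧ a % 2 = 1 ∨ (a ^ 2 % 8 = 0 ∨ a ^ 2 % 8 = 4) ∧ a % 2 = 0 := by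
    intro a
    have : a % 8 = 0 ∨ a % 8 = 1 ∨ a % 8 = 2 ∨ a % 8 = 3 ∨ a % 8 = 4 ∨ a % 8 = 5 ∨ a % 8 = 6 ∨
      a % 8 = 7 := by omega
    have h2 : a ^ 2 % 8 = a % 8 * (a % 8) % 8 := by rw [sq, Int.mul_emod]
    rcases this with h | h | h | h | h | h | h | h <;> rw [h] at h2 <;> omega
  rw [normSq_def'] at h8
  have h1 := sq_mod q.re
  have h2 := sq_mod q.imI
  have h3 := sq_mod q.imJ
  have h4 := sq_mod q.imK
  obtain ⟨a, ha⟩ : ∃ a, q.re = 2 * a := ⟨q.re / 2, by omega⟩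
  obtain ⟨b, hb⟩ : ∃ a, q.imI = 2 * a := ⟨q.imI / 2, by omega⟩
  obtain ⟨c, hc⟩ : ∃ a, q.imJ = 2 * a := ⟨q.imJ / 2, by omega⟩
  obtain ⟨d, hd⟩ : ∃ a, q.imK = 2 * a := ⟨q.imK / 2, by omega⟩
  rw [re_mul, ha, hb, hc, hd] at hh
  have : 2 * (h.re * a - h.imI * b - h.imJ * c - h.imK * d) = 1 := by linear_combination hh
  omega

theorem exists_normSq_eq_mul_odd {q h : ℍ[ℤ]} (hh : (h * q).re = 1) :
    ∃ p : ℕ × ℕ, p.1 ∈ ({1, 2, 4} : Finset ℕ) ∧ Odd p.2 ∧ normSq q = (p.1 : ℤ) * p.2 := by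
  have hq : q ≠ 0 := by rintro rfl; simp at hh
  obtain ⟨a, ha⟩ := Int.eq_ofNat_of_zero_le (normSq_nonneg (a := q))
  have ha0 : a ≠ 0 := by
    rintro rfl
    exact normSq_ne_zero.mpr hq ha
  obtain ⟨k, m, hm, rfl⟩ := Nat.exists_eq_two_pow_mul_odd ha0
  have hk : k < 3 := by
    by_contra! hk
    refine not_eight_dvd_normSq hh ?_
    rw [ha]
    have : 2 ^ 3 ∣ 2 ^ k * m := (pow_dvd_pow 2 hk).mul_right m
    exact_mod_cast this
  refine ⟨(2 ^ k, m), ?_, hm, by rw [ha]; push_cast; ring⟩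
  interval_cases k <;> simp

theorem modHom_mul_star_self {N : ℕ} {q : ℍ[ℤ]} (hN : (N : ℤ) ∣ normSq q) :
    modHom N q * star (modHom N q) = 0 := by
  rw [self_mul_star, normSq_modHom, (ZMod.intCast_zmod_eq_zero_iff_dvd _ _).mpr hN, coe_zero]

theorem modHom_re_mul {N : ℕ} {q h : ℍ[ℤ]} (hh : (h * q).re = 1) :
    (modHom N h * modHom N q).re = 1 := by
  rw [← map_mul, re_modHom, hh, Int.cast_one]

theorem exists_modHom_mul_eq_smul {N : ℕ} (hodd : Odd N) {q h x x' : ℍ[ℤ]}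
    (hh : (h * q).re = 1) (hN : (N : ℤ) ∣ normSq q) (hx : q * x = x' * q) :
    ∃ l : ℤ, modHom N q * modHom N x = (l : ZMod N) • modHom N q := by
  refine ⟨(x * h * q).re, ?_⟩
  have h0 := modHom_mul_star_self hN
  have := smul_mul_eq_of_mul_mul_star_eq_zero (x := modHom N x) (modHom_re_mul hh) h0 (by
    rw [← map_mul, hx, map_mul, mul_assoc, h0, mul_zero])
  rw [mul_smul] at this
  rw [(ZMod.isUnit_two_of_odd hodd).smul_left_cancel] at this
  rw [this, ← map_mul, ← map_mul, re_modHom]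

/-- If two integral quaternions `q`, `q'` act on `x` by compatible scalars modulo `N`, then
`q * star q'` is annihilated by the norm of `x` modulo `N`. -/
theorem modHom_smul_mul_star_eq_zero {N : ℕ} (hodd : Odd N) {q q' q₀ h h' h₀ x : ℍ[ℤ]} {n : ℤ}
    (hh : (h * q).re = 1) (hh' : (h' * q').re = 1) (hh₀ : (h₀ * q₀).re = 1)
    (hx : x * x = -(n : ℍ[ℤ])) (hs : star x = -x) {l l' l₀ : ℤ}
    (hl : modHom N q * modHom N x = (l : ZMod N) • modHom N q)
    (hl' : modHom N q' * modHom N x = (l' : ZMod N) • modHom N q')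
    (hl₀ : modHom N q₀ * modHom N x = (l₀ : ZMod N) • modHom N q₀)
    (hd : Int.gcd N (l + l₀) = Int.gcd N (l' + l₀)) :
    modHom N (n • (q * star q')) = 0 := by
  have hx' : modHom N x * modHom N x = -((n : ZMod N) : ℍ[ZMod N]) := by
    rw [← map_mul, hx, map_neg, modHom_coe]
  have hroot : ∀ {r s : ℍ[ℤ]} {a : ℤ}, (s * r).re = 1 →
      modHom N r * modHom N x = (a : ZMod N) • modHom N r → (N : ℤ) ∣ a ^ 2 - -n := by
    intro r s a hs hr
    have := sq_add_eq_zero_of_mul_eq_smul (modHom_re_mul hs) hr hx'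
    rw [← ZMod.intCast_zmod_eq_zero_iff_dvd]
    push_cast
    rw [← this]
    ring
  have h1 := (dvd_sub_sq_of_gcd_eq (hroot hh hl) (hroot hh' hl') (hroot hh₀ hl₀) hd).2
  rw [← ZMod.intCast_zmod_eq_zero_iff_dvd] at h1
  push_cast at h1
  have h2 := sq_add_eq_zero_of_mul_eq_smul (modHom_re_mul hh) hl hx'
  have h3 := add_smul_mul_star_eq_zero hl hl' (by rw [← modHom_star, hs, map_neg])
  have hu := ZMod.isUnit_two_of_odd hodd
  rw [modHom_smul, map_mul, modHom_star, ← (hu.mul hu).smul_left_cancel, smul_zero, smul_smul]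
  have e : (2 * 2 * n : ZMod N) = -(2 * l) * (l + l') - 2 * l * (l - l') := by
    linear_combination 4 * h2
  rw [e, h1, sub_zero, mul_smul, h3, smul_zero]

theorem exists_two_mul_sub_le (e n : ℤ) (hn : 0 < n) : ∃ a : ℤ, 4 * (e - n * a) ^ 2 ≤ n ^ 2 := by
  refine ⟨(2 * e + n) / (2 * n), ?_⟩
  have h1 := Int.emod_nonneg (2 * e + n) (show 2 * n ≠ 0 by omega)
  have h2 := Int.emod_lt_of_pos (2 * e + n) (show 0 < 2 * n by omega)
  have h3 := Int.mul_ediv_add_emod (2 * e + n) (2 * n)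
  nlinarith

/-- The Lipschitz order is nearly left Euclidean: every left ideal is, up to a factor `2`,
generated by an element of minimal norm. -/
theorem exists_forall_two_smul_eq_mul (I : Submodule ℍ[ℤ] ℍ[ℤ]) (hI : ∃ u ∈ I, u ≠ 0) :
    ∃ u ∈ I, u ≠ 0 ∧ ∀ s ∈ I, ∃ t : ℍ[ℤ], (2 : ℤ) • s = t * u := by
  have hex : ∃ k : ℕ, ∃ u ∈ I, u ≠ 0 ∧ (normSq u).natAbs = k := by
    obtain ⟨u, hu, hu0⟩ := hI
    exact ⟨_, u, hu, hu0, rfl⟩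
  classical
  obtain ⟨u, hu, hu0, hk⟩ := Nat.find_spec hex
  have hmin : ∀ r ∈ I, r ≠ 0 → normSq u ≤ normSq r := by
    intro r hr hr0
    have h1 := Nat.find_min' hex ⟨r, hr, hr0, rfl⟩
    rw [← hk] at h1
    rw [← Int.natAbs_of_nonneg (normSq_nonneg (a := u)),
      ← Int.natAbs_of_nonneg (normSq_nonneg (a := r))]
    exact_mod_cast h1
  refine ⟨u, hu, hu0, fun s hs => ?_⟩
  have hn : 0 < normSq u := lt_of_le_of_ne normSq_nonneg (normSq_ne_zero.mpr hu0).symm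
  set n := normSq u with hndef
  obtain ⟨a, ha⟩ := exists_two_mul_sub_le (s * star u).re n hn
  obtain ⟨b, hb⟩ := exists_two_mul_sub_le (s * star u).imI n hn
  obtain ⟨c, hc⟩ := exists_two_mul_sub_le (s * star u).imJ n hn
  obtain ⟨d, hd⟩ := exists_two_mul_sub_le (s * star u).imK n hn
  set t : ℍ[ℤ] := ofCoords a b c d with ht
  rcases eq_or_ne (s - t * u) 0 with h0 | h0
  · exact ⟨(2 : ℤ) • t, by rw [sub_eq_zero.mp h0, smul_mul_assoc]⟩
  have hle := hmin _ (I.sub_mem hs (I.smul_mem t hu)) h0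
  have he : (s - t * u) * star u = s * star u - n • t := by
    rw [sub_mul, mul_assoc, self_mul_star, mul_coe_eq_smul]
  have hnorm : normSq (s - t * u) * n = ((s * star u).re - n * a) ^ 2 +
      ((s * star u).imI - n * b) ^ 2 + ((s * star u).imJ - n * c) ^ 2 +
      ((s * star u).imK - n * d) ^ 2 := by
    have h1 : normSq ((s - t * u) * star u) = normSq (s - t * u) * n := by
      rw [map_mul, normSq_star]
    rw [← h1, he, normSq_def']
    simp only [re_sub, imI_sub, imJ_sub, imK_sub, re_smul, imI_smul, imJ_smul, imK_smul,
      smul_eq_mul, ht, re_ofCoords, imI_ofCoords, imJ_ofCoords, imK_ofCoords]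
  have hge : n ^ 2 ≤ ((s * star u).re - n * a) ^ 2 +
      ((s * star u).imI - n * b) ^ 2 + ((s * star u).imJ - n * c) ^ 2 +
      ((s * star u).imK - n * d) ^ 2 := by
    rw [← hnorm, sq]
    exact mul_le_mul_of_nonneg_right hle hn.le
  have half : ∀ e a : ℤ, 4 * (e - n * a) ^ 2 = n ^ 2 → ∃ f, 2 * e = n * f := by
    intro e a h
    have : (2 * (e - n * a)) ^ 2 = n ^ 2 := by linear_combination h
    rcases sq_eq_sq_iff_eq_or_eq_neg.mp this with h | h
    · exact ⟨2 * a + 1, by linear_combination h⟩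
    · exact ⟨2 * a - 1, by linear_combination h⟩
  obtain ⟨a', ha'⟩ := half (s * star u).re a (by linarith)
  obtain ⟨b', hb'⟩ := half (s * star u).imI b (by linarith)
  obtain ⟨c', hc'⟩ := half (s * star u).imJ c (by linarith)
  obtain ⟨d', hd'⟩ := half (s * star u).imK d (by linarith)
  refine ⟨ofCoords a' b' c' d', ?_⟩
  have h2 : (2 : ℤ) • (s * star u) = n • ofCoords a' b' c' d' := by
    ext <;> simp only [re_smul, imI_smul, imJ_smul, imK_smul, smul_eq_mul, re_ofCoords,
      imI_ofCoords, imJ_ofCoords, imK_ofCoords] <;> assumption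
  have h3 : n • ((2 : ℤ) • s) = n • (ofCoords a' b' c' d' * u) := by
    rw [← smul_mul_assoc, ← h2, smul_mul_assoc, mul_assoc, star_mul_self, mul_coe_eq_smul]
    exact smul_comm _ _ _
  exact smul_right_injective _ hn.ne' h3

/-- The integral quaternions `s` with `s * star q ≡ 0` modulo `M`. -/
def annIdeal (M : ℕ) (q : ℍ[ℤ]) : Submodule ℍ[ℤ] ℍ[ℤ] where
  carrier := {s | modHom M (s * star q) = 0}
  zero_mem' := by simp
  add_mem' {a b} ha hb := by
    rw [Set.mem_ofPred_eq, add_mul, map_add, show modHom M (a * star q) = 0 from ha,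
      show modHom M (b * star q) = 0 from hb, add_zero]
  smul_mem' c {a} ha := by
    rw [Set.mem_ofPred_eq, smul_eq_mul, mul_assoc, map_mul, show modHom M (a * star q) = 0 from ha,
      mul_zero]

theorem mem_annIdeal {M : ℕ} {q s : ℍ[ℤ]} : s ∈ annIdeal M q ↔ modHom M (s * star q) = 0 := Iff.rfl

/-- Quaternions of norm `c * (M * k)` in a left ideal of norm `M` inject into quaternions of a
fixed norm at most `4 * c * k`. -/
theorem exists_card_le_of_mem_annIdeal {M k c : ℕ} (hM : Odd M) (hk : k ≠ 0) (hc : c ≠ 0)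
    {q₁ h₁ : ℍ[ℤ]} (hh : (h₁ * q₁).re = 1) (hq₁ : normSq q₁ = (c : ℤ) * (M * k))
    (F : Finset ℍ[ℤ]) (hF : ∀ q ∈ F, normSq q = (c : ℤ) * (M * k) ∧ q ∈ annIdeal M q₁) :
    ∃ a : ℕ, a ≠ 0 ∧ a ≤ 4 * c * k ∧ ∃ G : Finset ℍ[ℤ],
      (∀ t ∈ G, normSq t = (a : ℤ)) ∧ F.card ≤ G.card := by
  classical
  have hM0 : 0 < M := hM.pos
  have hMq : (M : ℤ) ∣ normSq q₁ := ⟨c * k, by rw [hq₁]; ring⟩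
  have hmem₁ : q₁ ∈ annIdeal M q₁ := by
    rw [mem_annIdeal, map_mul, modHom_star, modHom_mul_star_self hMq]
  have hq0 : q₁ ≠ 0 := by rintro rfl; simp at hh
  obtain ⟨u, hu, hu0, hgen⟩ := exists_forall_two_smul_eq_mul (annIdeal M q₁) ⟨q₁, hmem₁, hq0⟩
  choose! t ht using hgen
  have hmul : ∀ s ∈ annIdeal M q₁, normSq (t s) * normSq u = 4 * normSq s := by
    intro s hs
    rw [← map_mul, ← ht s hs, normSq_smul]
    norm_num
  have hMu : (M : ℤ) ∣ normSq u := by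
    rw [mem_annIdeal, map_mul, modHom_star] at hu
    have := two_smul_mul_star_eq_zero (modHom_re_mul hh) hu hu
    rw [self_mul_star, normSq_modHom] at this
    rw [← ZMod.intCast_zmod_eq_zero_iff_dvd, ← (ZMod.isUnit_two_of_odd hM).mul_right_eq_zero]
    have := congrArg (fun z => z.re) this
    simpa using this
  obtain ⟨w, hw⟩ := hMu
  have hupos : 0 < normSq u := lt_of_le_of_ne normSq_nonneg (normSq_ne_zero.mpr hu0).symm
  have hM0' : (0 : ℤ) < M := by exact_mod_cast hM0
  have hwpos : 0 < w := by
    rw [hw] at hupos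
    exact pos_of_mul_pos_right hupos hM0'.le
  have htw : ∀ s ∈ annIdeal M q₁, normSq s = (c : ℤ) * (M * k) →
      normSq (t s) * w = 4 * c * k := by
    intro s hs hsn
    refine mul_left_cancel₀ hM0'.ne' ?_
    have := hmul s hs
    rw [hw, hsn] at this
    linear_combination this
  obtain ⟨a, ha⟩ := Int.eq_ofNat_of_zero_le (normSq_nonneg (a := t q₁))
  have haw : (a : ℤ) * w = 4 * c * k := by
    rw [← htw q₁ hmem₁ hq₁, ha]
  have hk' : 0 < (4 * c * k : ℤ) := by positivity
  refine ⟨a, ?_, ?_, F.image t, ?_, ?_⟩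
  · rintro rfl
    simp at haw
    omega
  · zify
    rw [← haw]
    nlinarith [Int.natCast_nonneg a]
  · intro s hs
    obtain ⟨q, hq, rfl⟩ := Finset.mem_image.mp hs
    refine mul_right_cancel₀ hwpos.ne' ?_
    rw [haw, htw q (hF q hq).2 (hF q hq).1]
  · rw [Finset.card_image_of_injOn]
    intro q hq q' hq' h
    have h1 := ht q (hF q hq).2
    rw [h, ← ht q' (hF q' hq').2] at h1
    exact smul_right_injective _ (two_ne_zero' ℤ) h1


theorem modHom_gcd_smul_eq_zero {N : ℕ} {n m : ℤ} {q : ℍ[ℤ]} (hn : modHom N (n • q) = 0)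
    (hm : modHom N (m • q) = 0) : modHom N ((Int.gcd n m : ℤ) • q) = 0 := by
  rw [Int.gcd_eq_gcd_ab, add_smul, mul_comm n, mul_comm m, mul_smul, mul_smul, map_add,
    modHom_smul, hn, modHom_smul _ _ (m • q), hm, smul_zero, smul_zero, add_zero]

theorem card_le_of_mul_eq_mul {x y : ℍ[ℤ]} {n m : ℤ} (hn : x * x = -(n : ℍ[ℤ]))
    (hm : y * y = -(m : ℍ[ℤ])) (hsx : star x = -x) (hsy : star y = -y) (hg : Int.gcd n m ≠ 0)
    {E : ℕ} (hE : normSq (x * y - y * x) = (E : ℤ)) (hE0 : E ≠ 0) {B : ℕ}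
    (hB : ∀ a ≠ 0, a ≤ 16 * Int.gcd n m → ∀ G : Finset ℍ[ℤ],
      (∀ t ∈ G, normSq t = (a : ℤ)) → G.card ≤ B)
    (Q : Finset ℍ[ℤ]) (hQ : ∀ q ∈ Q, (∃ h : ℍ[ℤ], (h * q).re = 1) ∧
      ∃ x' y', q * x = x' * q ∧ q * y = y' * q) :
    Q.card ≤ B * (E.divisors.card * E.divisors.card) * (3 * E.divisors.card) := by
  classical
  have key : ∀ q ∈ Q, ∃ (h : ℍ[ℤ]) (p : ℕ × ℕ) (l k : ℤ), (h * q).re = 1 ∧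
      p.1 ∈ ({1, 2, 4} : Finset ℕ) ∧ Odd p.2 ∧ normSq q = (p.1 : ℤ) * p.2 ∧ p.2 ∈ E.divisors ∧
      modHom p.2 q * modHom p.2 x = (l : ZMod p.2) • modHom p.2 q ∧
      modHom p.2 q * modHom p.2 y = (k : ZMod p.2) • modHom p.2 q := by
    intro q hq
    obtain ⟨⟨h, hh⟩, x', y', hx, hy⟩ := hQ q hq
    obtain ⟨p, hp, hodd, hN⟩ := exists_normSq_eq_mul_odd hh
    have hdvd : (p.2 : ℤ) ∣ normSq q := ⟨p.1, by rw [hN, mul_comm]⟩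
    obtain ⟨l, hl⟩ := exists_modHom_mul_eq_smul hodd hh hdvd hx
    obtain ⟨k, hk⟩ := exists_modHom_mul_eq_smul hodd hh hdvd hy
    refine ⟨h, p, l, k, hh, hp, hodd, hN, ?_, hl, hk⟩
    have := normSq_commutator_eq_zero (modHom_re_mul hh) hl hk
    rw [← map_mul, ← map_mul, ← map_sub, normSq_modHom, hE,
      ZMod.intCast_zmod_eq_zero_iff_dvd] at this
    exact Nat.mem_divisors.mpr ⟨by exact_mod_cast this, hE0⟩
  choose! h p l k hh hc hodd hN hdvd hl hk using key
  have hcard : (({1, 2, 4} : Finset ℕ) ×ˢ E.divisors).card = 3 * E.divisors.card := by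
    rw [Finset.card_product]; rfl
  rw [← hcard]
  refine Finset.card_le_mul_card_image_of_maps_to (f := p)
    (fun q hq => Finset.mem_product.mpr ⟨hc q hq, hdvd q hq⟩) _ fun b hb => ?_
  obtain ⟨hb1, hb2⟩ := Finset.mem_product.mp hb
  rcases Finset.eq_empty_or_nonempty (Q.filter fun q => p q = b) with he | ⟨q₀, hq₀⟩
  · rw [he]; simp
  obtain ⟨hq₀, hp₀⟩ := Finset.mem_filter.mp hq₀
  rw [← Finset.card_product]
  have hmem : ∀ r : ℤ, Int.gcd b.2 r ∈ E.divisors := fun r =>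
    Nat.mem_divisors.mpr ⟨(Nat.gcd_dvd_left _ _).trans (Nat.dvd_of_mem_divisors hb2), hE0⟩
  refine Finset.card_le_mul_card_image_of_maps_to
    (f := fun q => (Int.gcd b.2 (l q + l q₀), Int.gcd b.2 (k q + k q₀)))
    (fun q _ => Finset.mem_product.mpr ⟨hmem _, hmem _⟩) _ fun d _ => ?_
  set F := (Q.filter fun q => p q = b).filter
    fun q => (Int.gcd b.2 (l q + l q₀), Int.gcd b.2 (k q + k q₀)) = d with hF
  have hFmem : ∀ q ∈ F, q ∈ Q ∧ p q = b ∧ Int.gcd b.2 (l q + l q₀) = d.1 ∧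
      Int.gcd b.2 (k q + k q₀) = d.2 := by
    intro q hq
    obtain ⟨h1, h2⟩ := Finset.mem_filter.mp hq
    obtain ⟨h3, h4⟩ := Finset.mem_filter.mp h1
    exact ⟨h3, h4, congrArg Prod.fst h2, congrArg Prod.snd h2⟩
  rcases Finset.eq_empty_or_nonempty F with he | ⟨q₁, hq₁⟩
  · rw [he]; simp
  obtain ⟨hQ₁, hp₁, hd₁, hd₁'⟩ := hFmem q₁ hq₁
  set g := Int.gcd n m
  have hodd₀ : Odd b.2 := hp₀ ▸ hodd q₀ hq₀
  have hb0 : b.2 ≠ 0 := hodd₀.pos.ne'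
  have hMk : b.2 / b.2.gcd g * b.2.gcd g = b.2 := Nat.div_mul_cancel (Nat.gcd_dvd_left _ _)
  have hMk' : ((b.2 / b.2.gcd g : ℕ) : ℤ) * (b.2.gcd g : ℕ) = b.2 := by exact_mod_cast hMk
  have hM : Odd (b.2 / b.2.gcd g) := by
    rw [← hMk] at hodd₀
    exact (Nat.odd_mul.mp hodd₀).1
  have hc0 : b.1 ≠ 0 ∧ b.1 ≤ 4 := by
    simp only [Finset.mem_insert, Finset.mem_singleton] at hb1
    omega
  have hNb : ∀ q ∈ Q, p q = b → normSq q = (b.1 : ℤ) * b.2 := by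
    rintro q hq rfl; exact hN q hq
  have hlb : ∀ q ∈ Q, p q = b → modHom b.2 q * modHom b.2 x = (l q : ZMod b.2) • modHom b.2 q ∧
      modHom b.2 q * modHom b.2 y = (k q : ZMod b.2) • modHom b.2 q := by
    rintro q hq rfl; exact ⟨hl q hq, hk q hq⟩
  have hgk : b.2.gcd g ≤ g := Nat.gcd_le_right _ (Nat.pos_of_ne_zero hg)
  obtain ⟨a, ha0, hak, G, hG, hFG⟩ := exists_card_le_of_mem_annIdeal hM
    (Nat.gcd_pos_of_pos_left g (Nat.pos_of_ne_zero hb0)).ne' hc0.1 (hh q₁ hQ₁)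
    (by rw [hMk']; exact hNb q₁ hQ₁ hp₁) F (by
      intro q hq
      obtain ⟨hQq, hpq, hd, hd'⟩ := hFmem q hq
      refine ⟨by rw [hMk']; exact hNb q hQq hpq, ?_⟩
      rw [mem_annIdeal]
      refine modHom_eq_zero_of_gcd_smul hb0 (modHom_gcd_smul_eq_zero ?_ ?_)
      · exact modHom_smul_mul_star_eq_zero hodd₀ (hh q hQq) (hh q₁ hQ₁) (hh q₀ hq₀) hn hsx
          (hlb q hQq hpq).1 (hlb q₁ hQ₁ hp₁).1 (hlb q₀ hq₀ hp₀).1 (hd.trans hd₁.symm)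
      · exact modHom_smul_mul_star_eq_zero hodd₀ (hh q hQq) (hh q₁ hQ₁) (hh q₀ hq₀) hm hsy
          (hlb q hQq hpq).2 (hlb q₁ hQ₁ hp₁).2 (hlb q₀ hq₀ hp₀).2 (hd'.trans hd₁'.symm))
  refine hFG.trans (hB a ha0 (hak.trans ?_) G hG)
  calc 4 * b.1 * b.2.gcd g ≤ 4 * 4 * g := by gcongr; exact hc0.2
    _ = 16 * g := by norm_num

theorem exists_eq_smul_of_ne_zero {p : ℍ[ℤ]} (hp : p ≠ 0) :
    ∃ (d : ℤ) (q h : ℍ[ℤ]), d ≠ 0 ∧ p = d • q ∧ (h * q).re = 1 := by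
  set f : Fin 4 → ℤ := ![p.re, p.imI, p.imJ, p.imK] with hf
  obtain ⟨d, hd⟩ := IsPrincipalIdealRing.principal (Ideal.span (Set.range f))
  have hdvd : ∀ i, d ∣ f i := by
    intro i
    have hi : f i ∈ Ideal.span (Set.range f) := Ideal.subset_span (Set.mem_range_self i)
    rw [hd] at hi
    exact Ideal.mem_span_singleton.mp hi
  choose e he using hdvd
  obtain ⟨c, hc⟩ := Ideal.mem_span_range_iff_exists_fun.mp
    (show d ∈ Ideal.span (Set.range f) by
      rw [hd]; exact Submodule.mem_span_singleton_self d)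
  have hpe : p = d • ofCoords (e 0) (e 1) (e 2) (e 3) := by
    ext <;> simp [← he, hf]
  have hd0 : d ≠ 0 := by
    rintro rfl
    exact hp (by rw [hpe, zero_smul])
  refine ⟨d, ofCoords (e 0) (e 1) (e 2) (e 3), ofCoords (c 0) (-c 1) (-c 2) (-c 3), hd0, hpe, ?_⟩
  refine mul_left_cancel₀ hd0 ?_
  simp only [he, Fin.sum_univ_four] at hc
  simp only [re_mul, re_ofCoords, imI_ofCoords, imJ_ofCoords, imK_ofCoords]
  linear_combination hc

/-- The pure quaternion with given vector part. -/
def ofVec (v : Fin 3 → ℤ) : ℍ[ℤ] := ofCoords 0 (v 0) (v 1) (v 2)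

@[simp] theorem re_ofVec (v : Fin 3 → ℤ) : (ofVec v).re = 0 := rfl
@[simp] theorem imI_ofVec (v : Fin 3 → ℤ) : (ofVec v).imI = v 0 := rfl
@[simp] theorem imJ_ofVec (v : Fin 3 → ℤ) : (ofVec v).imJ = v 1 := rfl
@[simp] theorem imK_ofVec (v : Fin 3 → ℤ) : (ofVec v).imK = v 2 := rfl

theorem ofVec_injective : Function.Injective ofVec := by
  intro u v h
  have := Quaternion.ext_iff.mp h
  funext i
  fin_cases i
  · exact this.2.1
  · exact this.2.2.1
  · exact this.2.2.2

theorem star_ofVec (v : Fin 3 → ℤ) : star (ofVec v) = -ofVec v := by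
  ext <;> simp

theorem ofVec_mul_self (v : Fin 3 → ℤ) : ofVec v * ofVec v = -((v ⬝ᵥ v : ℤ) : ℍ[ℤ]) := by
  ext <;> simp [vec3_dotProduct] <;> ring

theorem ofVec_mul_ofVec_cross (u v : Fin 3 → ℤ) :
    ofVec u * ofVec (u ⨯₃ v) = -(ofVec (u ⨯₃ v) * ofVec u) := by
  ext <;> simp [cross_apply] <;> ring

theorem ofVec_cross_mul_ofVec (u v : Fin 3 → ℤ) :
    ofVec (u ⨯₃ v) * ofVec u = (u ⬝ᵥ u) • ofVec v - (u ⬝ᵥ v) • ofVec u := by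
  ext <;> simp [cross_apply, vec3_dotProduct] <;> ring

theorem normSq_ofVec_commutator (u v : Fin 3 → ℤ) :
    normSq (ofVec u * ofVec v - ofVec v * ofVec u) =
      4 * ((u ⬝ᵥ u) * (v ⬝ᵥ v) - (u ⬝ᵥ v) ^ 2) := by
  simp [normSq_def', vec3_dotProduct]
  ring

theorem exists_primitive_intertwining {u v u' v' : Fin 3 → ℤ} (hn : u ⬝ᵥ u ≠ 0)
    (hD : (u ⬝ᵥ u) * (v ⬝ᵥ v) - (u ⬝ᵥ v) ^ 2 ≠ 0) (huu : u' ⬝ᵥ u' = u ⬝ᵥ u)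
    (huv : u' ⬝ᵥ v' = u ⬝ᵥ v) (hvv : v' ⬝ᵥ v' = v ⬝ᵥ v) :
    ∃ q h : ℍ[ℤ], (h * q).re = 1 ∧ q * ofVec u = ofVec u' * q ∧ q * ofVec v = ofVec v' * q := by
  set D := (u ⬝ᵥ u) * (v ⬝ᵥ v) - (u ⬝ᵥ v) ^ 2 with hDdef
  have hcross : ∀ a b : Fin 3 → ℤ,
      (a ⨯₃ b) ⬝ᵥ (a ⨯₃ b) = (a ⬝ᵥ a) * (b ⬝ᵥ b) - (a ⬝ᵥ b) ^ 2 := by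
    intro a b
    rw [cross_dot_cross, dotProduct_comm b a, sq]
  have hww : ofVec (u ⨯₃ v) * ofVec (u ⨯₃ v) = -(D : ℍ[ℤ]) := by rw [ofVec_mul_self, hcross]
  have hww' : ofVec (u' ⨯₃ v') * ofVec (u' ⨯₃ v') = -(D : ℍ[ℤ]) := by
    rw [ofVec_mul_self, hcross, huu, huv, hvv]
  have hx' : ofVec u' * ofVec u' = -((u ⬝ᵥ u : ℤ) : ℍ[ℤ]) := by rw [ofVec_mul_self, huu]
  obtain ⟨h, hne⟩ := exists_intertwiner_ne_zero
    (mul_ne_zero four_ne_zero (mul_ne_zero hn hD)) (ofVec u') (ofVec (u' ⨯₃ v'))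
    (re_ofVec u) (re_ofVec (u ⨯₃ v)) (by rw [ofVec_cross_mul_ofVec]; simp)
  have h1 := intertwiner_mul (n := u ⬝ᵥ u) (D := D) (ofVec_mul_self u) hx'
    (ofVec_mul_ofVec_cross u' v') h (w := ofVec (u ⨯₃ v))
  have h2 := intertwiner_mul' (n := u ⬝ᵥ u) (D := D) hww hww' (ofVec_mul_ofVec_cross u v) h
    (x' := ofVec u')
  obtain ⟨d, q, h', hd, hp, hh⟩ := exists_eq_smul_of_ne_zero hne
  rw [hp, smul_mul_assoc, mul_smul_comm] at h1 h2
  replace h1 := smul_right_injective _ hd h1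
  replace h2 := smul_right_injective _ hd h2
  refine ⟨q, h', hh, h1, smul_right_injective _ hn ?_⟩
  have h3 : q * (ofVec (u ⨯₃ v) * ofVec u) = ofVec (u' ⨯₃ v') * ofVec u' * q := by
    rw [← mul_assoc, h2, mul_assoc, h1, mul_assoc]
  rw [ofVec_cross_mul_ofVec, ofVec_cross_mul_ofVec, huu, huv, mul_sub, sub_mul, mul_smul_comm,
    mul_smul_comm, smul_mul_assoc, smul_mul_assoc, h1] at h3
  exact sub_left_injective h3

theorem eq_of_dotProduct_eq {u v a b : Fin 3 → ℤ}
    (hD : (u ⬝ᵥ u) * (v ⬝ᵥ v) - (u ⬝ᵥ v) ^ 2 ≠ 0) (hu : a ⬝ᵥ u = b ⬝ᵥ u) (hv : a ⬝ᵥ v = b ⬝ᵥ v)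
    (hc : a ⬝ᵥ (u ⨯₃ v) = b ⬝ᵥ (u ⨯₃ v)) : a = b := by
  have hdet : (Matrix.of ![u, v, u ⨯₃ v]).det ≠ 0 := by
    convert hD using 1
    simp [det_fin_three, cross_apply, vec3_dotProduct]
    ring
  rw [← sub_eq_zero]
  refine Matrix.eq_zero_of_mulVec_eq_zero hdet ?_
  funext i
  fin_cases i <;> simp [mulVec, dotProduct_comm _ (a - b), sub_dotProduct, hu, hv, hc]

theorem dotProduct_cross_sq (a u v : Fin 3 → ℤ) : (a ⬝ᵥ (u ⨯₃ v)) ^ 2 =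
    (a ⬝ᵥ a) * ((u ⬝ᵥ u) * (v ⬝ᵥ v) - (u ⬝ᵥ v) ^ 2) - (v ⬝ᵥ v) * (u ⬝ᵥ a) ^ 2 +
      2 * (u ⬝ᵥ v) * (u ⬝ᵥ a) * (v ⬝ᵥ a) - (u ⬝ᵥ u) * (v ⬝ᵥ a) ^ 2 := by
  simp only [vec3_dotProduct, cross_apply, cons_val]
  ring

/-- The number of triples with the Gram matrix of `v`, in terms of the number of integral
quaternions of given norm. -/
theorem natCard_gram_eq_le {v : Fin 3 → Fin 3 → ℤ} (hn : v 0 ⬝ᵥ v 0 ≠ 0)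
    (hD : (v 0 ⬝ᵥ v 0) * (v 1 ⬝ᵥ v 1) - (v 0 ⬝ᵥ v 1) ^ 2 ≠ 0) {E : ℕ}
    (hE : 4 * ((v 0 ⬝ᵥ v 0) * (v 1 ⬝ᵥ v 1) - (v 0 ⬝ᵥ v 1) ^ 2) = (E : ℤ)) {B : ℕ}
    (hB : ∀ a ≠ 0, a ≤ 16 * Int.gcd (v 0 ⬝ᵥ v 0) (v 1 ⬝ᵥ v 1) → ∀ G : Finset ℍ[ℤ],
      (∀ t ∈ G, normSq t = (a : ℤ)) → G.card ≤ B) :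
    Nat.card {t : Fin 3 → Fin 3 → ℤ // ∀ i j, t i ⬝ᵥ t j = v i ⬝ᵥ v j} ≤
      B * (E.divisors.card * E.divisors.card) * (3 * E.divisors.card) * 2 := by
  classical
  rcases finite_or_infinite {t : Fin 3 → Fin 3 → ℤ // ∀ i j, t i ⬝ᵥ t j = v i ⬝ᵥ v j} with _ | _
  swap
  · rw [Nat.card_eq_zero_of_infinite]; exact Nat.zero_le _
  have := Fintype.ofFinite {t : Fin 3 → Fin 3 → ℤ // ∀ i j, t i ⬝ᵥ t j = v i ⬝ᵥ v j}
  have hex : ∀ t : {t : Fin 3 → Fin 3 → ℤ // ∀ i j, t i ⬝ᵥ t j = v i ⬝ᵥ v j},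
      ∃ q h : ℍ[ℤ], (h * q).re = 1 ∧ q * ofVec (v 0) = ofVec (t.1 0) * q ∧
        q * ofVec (v 1) = ofVec (t.1 1) * q := fun t =>
    exists_primitive_intertwining hn hD (t.2 0 0) (t.2 0 1) (t.2 1 1)
  choose q h hh h0 h1 using hex
  have hq0 : ∀ t, q t ≠ 0 := by
    intro t ht
    have := hh t
    rw [ht] at this
    simp at this
  have hQ := card_le_of_mul_eq_mul (ofVec_mul_self (v 0)) (ofVec_mul_self (v 1)) (star_ofVec _)
    (star_ofVec _) (by rw [Ne, Int.gcd_eq_zero_iff]; exact fun h => hn h.1)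
    (by rw [normSq_ofVec_commutator, hE])
    (by rintro rfl; exact mul_ne_zero four_ne_zero hD hE) hB (Finset.univ.image q) (by
      intro p hp
      obtain ⟨t, -, rfl⟩ := Finset.mem_image.mp hp
      exact ⟨⟨_, hh t⟩, _, _, h0 t, h1 t⟩)
  set s := v 2 ⬝ᵥ (v 0 ⨯₃ v 1) with hs
  rw [Nat.card_eq_fintype_card, ← Finset.card_univ]
  calc _ ≤ (Finset.univ.image q ×ˢ ({s, -s} : Finset ℤ)).card := by
        refine Finset.card_le_card_of_injOn (fun t => (q t, t.1 2 ⬝ᵥ (t.1 0 ⨯₃ t.1 1))) ?_ ?_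
        · intro t _
          refine Finset.mem_coe.mpr (Finset.mem_product.mpr
            ⟨Finset.mem_image_of_mem q (Finset.mem_univ t), ?_⟩)
          rw [Finset.mem_insert, Finset.mem_singleton]
          refine sq_eq_sq_iff_eq_or_eq_neg.mp ?_
          rw [hs, dotProduct_cross_sq, dotProduct_cross_sq]
          simp only [t.2]
        · intro t _ t' _ htt
          obtain ⟨hq, hc⟩ := Prod.ext_iff.mp htt
          simp only at hq hc
          have e0 : t.1 0 = t'.1 0 := ofVec_injective <| mul_right_cancel₀ (hq0 t) <| by
            rw [← h0 t, hq, h0 t']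
          have e1 : t.1 1 = t'.1 1 := ofVec_injective <| mul_right_cancel₀ (hq0 t) <| by
            rw [← h1 t, hq, h1 t']
          have e2 : t.1 2 = t'.1 2 := by
            refine eq_of_dotProduct_eq (u := t.1 0) (v := t.1 1) ?_ ?_ ?_ ?_
            · rwa [t.2, t.2, t.2]
            · rw [t.2, e0, t'.2]
            · rw [t.2, e1, t'.2]
            · rw [hc, e0, e1]
          ext1
          funext i
          fin_cases i
          exacts [e0, e1, e2]
    _ = (Finset.univ.image q).card * ({s, -s} : Finset ℤ).card := Finset.card_product _ _
    _ ≤ _ := Nat.mul_le_mul hQ Finset.card_le_two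

end Quaternion

theorem dotProduct_ne_zero_of_linearIndependent {v : Fin 3 → Fin 3 → ℤ}
    (hv : LinearIndependent ℚ (fun i => fun j => ((v i j : ℚ)))) :
    v 0 ⬝ᵥ v 0 ≠ 0 ∧ (v 0 ⬝ᵥ v 0) * (v 1 ⬝ᵥ v 1) - (v 0 ⬝ᵥ v 1) ^ 2 ≠ 0 := by
  have hdet : ((Matrix.of v).map (Int.cast : ℤ → ℚ)).det ≠ 0 := by
    have h1 : LinearIndependent ℚ ((Matrix.of v).map (Int.cast : ℤ → ℚ)).row := hv
    rw [Matrix.linearIndependent_rows_iff_isUnit, Matrix.isUnit_iff_isUnit_det] at h1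
    exact h1.ne_zero
  have htriple : v 2 ⬝ᵥ (v 0 ⨯₃ v 1) ≠ 0 := by
    intro h
    apply hdet
    rw [← Int.cast_det]
    convert Int.cast_zero
    rw [← h]
    simp only [det_fin_three, cross_apply, vec3_dotProduct, cons_val, of_apply]
    ring
  constructor
  · intro h
    rw [dotProduct_self_eq_zero] at h
    simp [h] at htriple
  · intro h
    have : (v 0 ⨯₃ v 1) ⬝ᵥ (v 0 ⨯₃ v 1) = 0 := by
      rw [cross_dot_cross, dotProduct_comm (v 1) (v 0), ← sq, h]
    rw [dotProduct_self_eq_zero] at this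
    simp [this] at htriple

theorem rpow_le_rpow_natCast_mul {x : ℝ} {q k : ℕ} {ε : ℝ} (hε : 0 < ε) (hx : 0 ≤ x)
    (hb : x ≤ (q : ℝ) ^ k) :
    x ^ ε ≤ (q : ℝ) ^ (k * ε) := by
  rw [Real.rpow_mul (Nat.cast_nonneg q), Real.rpow_natCast]
  exact Real.rpow_le_rpow hx hb hε.le

/-- For every `ε > 0` there is `C > 0` such that for every integer `q > 1`: if
`x, y, z ∈ ℤ³` are linearly independent (as vectors of `ℚ³`) with all coordinates in
`[0,q]`, and `Λ` is the Gram matrix of `(x,y,z)`, then the number of triples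
`(x',y',z') ∈ (ℤ³)³` with Gram matrix `Λ` is at most `C · q^ε · gcd(Λ₁₁, Λ₂₂)`. -/
theorem congruence_class_size :
    ∀ ε : ℝ, 0 < ε → ∃ C : ℝ, 0 < C ∧ ∀ q : ℕ, 1 < q →
      ∀ v : Fin 3 → (Fin 3 → ℤ),
        LinearIndependent ℚ (fun i => fun j => ((v i j : ℚ))) →
        (∀ i j, 0 ≤ v i j ∧ v i j ≤ q) →
        ∀ Λ : Matrix (Fin 3) (Fin 3) ℤ, (∀ i j, Λ i j = v i ⬝ᵥ v j) →
        (Nat.card {t : Fin 3 → (Fin 3 → ℤ) // ∀ i j, t i ⬝ᵥ t j = Λ i j} : ℝ) ≤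
          C * (q : ℝ) ^ ε * (Int.gcd (Λ 0 0) (Λ 1 1) : ℝ) := by
  intro ε hε
  have hε' : 0 < ε / 38 := by positivity
  obtain ⟨C₁, hC₁, hdiv⟩ := exists_card_divisors_le_rpow hε'
  obtain ⟨C₂, hC₂, hquat⟩ := exists_card_normSq_eq_le_rpow hε'
  refine ⟨96 * C₂ * C₁ ^ 3, by positivity, fun q hq v hv hvq Λ hΛ => ?_⟩
  simp only [hΛ]
  obtain ⟨hn, hD⟩ := dotProduct_ne_zero_of_linearIndependent hv
  have hq2 : (2 : ℤ) ≤ q := by exact_mod_cast hq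
  have hsq : ∀ i, 0 ≤ v i ⬝ᵥ v i ∧ v i ⬝ᵥ v i ≤ 3 * (q : ℤ) ^ 2 := by
    intro i
    have h (j) : v i j * v i j ≤ (q : ℤ) ^ 2 := by
      rw [sq]; exact mul_self_le_mul_self (hvq i j).1 (hvq i j).2
    rw [vec3_dotProduct]
    refine ⟨?_, by linarith [h 0, h 1, h 2]⟩
    linarith [mul_self_nonneg (v i 0), mul_self_nonneg (v i 1), mul_self_nonneg (v i 2)]
  have hDpos : 0 ≤ (v 0 ⬝ᵥ v 0) * (v 1 ⬝ᵥ v 1) - (v 0 ⬝ᵥ v 1) ^ 2 := by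
    have h := Quaternion.normSq_nonneg (a := Quaternion.ofVec (v 0) * Quaternion.ofVec (v 1) -
      Quaternion.ofVec (v 1) * Quaternion.ofVec (v 0))
    rw [Quaternion.normSq_ofVec_commutator] at h
    linarith
  obtain ⟨E, hE⟩ := Int.eq_ofNat_of_zero_le (mul_nonneg zero_le_four hDpos)
  have hE0 : E ≠ 0 := by
    rintro rfl
    exact mul_ne_zero four_ne_zero hD hE
  set g := Int.gcd (v 0 ⬝ᵥ v 0) (v 1 ⬝ᵥ v 1) with hg
  have hEq : E ≤ q ^ 10 := by
    zify
    rw [← hE]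
    have h1 := mul_le_mul (hsq 0).2 (hsq 1).2 (hsq 1).1 (by positivity)
    have h2 : (64 : ℤ) * q ^ 4 ≤ q ^ 6 * q ^ 4 :=
      mul_le_mul_of_nonneg_right (by simpa using pow_le_pow_left₀ (by norm_num) hq2 6)
        (by positivity)
    nlinarith [sq_nonneg (v 0 ⬝ᵥ v 1), pow_nonneg (zero_le_two.trans hq2) 4]
  have hgq : 16 * g ≤ q ^ 8 := by
    have h1 : (g : ℤ) ≤ v 0 ⬝ᵥ v 0 :=
      Int.le_of_dvd (lt_of_le_of_ne (hsq 0).1 hn.symm) (Int.gcd_dvd_left _ _)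
    have h2 : (64 : ℤ) * q ^ 2 ≤ q ^ 6 * q ^ 2 :=
      mul_le_mul_of_nonneg_right (by simpa using pow_le_pow_left₀ (by norm_num) hq2 6)
        (by positivity)
    zify
    nlinarith [(hsq 0).2, sq_nonneg (q : ℤ)]
  have hτ : (E.divisors.card : ℝ) ≤ C₁ * (q : ℝ) ^ ((10 : ℕ) * (ε / 38)) :=
    (hdiv E hE0).trans <| by
      gcongr
      exact rpow_le_rpow_natCast_mul hε' (Nat.cast_nonneg E) (by exact_mod_cast hEq)
  have hcount := Quaternion.natCard_gram_eq_le
    (B := ⌊C₂ * (16 * g : ℕ) * (q : ℝ) ^ ((8 : ℕ) * (ε / 38))⌋₊) hn hD hE <| by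
      intro a ha hag G hG
      refine Nat.le_floor ((hquat a ha G hG).trans ?_)
      gcongr
      exact rpow_le_rpow_natCast_mul hε' (Nat.cast_nonneg a) (by exact_mod_cast hag.trans hgq)
  have hB : (⌊C₂ * (16 * g : ℕ) * (q : ℝ) ^ ((8 : ℕ) * (ε / 38))⌋₊ : ℝ) ≤
      C₂ * (16 * g : ℕ) * (q : ℝ) ^ ((8 : ℕ) * (ε / 38)) := Nat.floor_le (by positivity)
  set B := ⌊C₂ * (16 * g : ℕ) * (q : ℝ) ^ ((8 : ℕ) * (ε / 38))⌋₊
  set X := (q : ℝ) ^ ((10 : ℕ) * (ε / 38)) with hX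
  set Y := (q : ℝ) ^ ((8 : ℕ) * (ε / 38)) with hY
  have hXY : Y * X ^ 3 = (q : ℝ) ^ ε := by
    have hq0 : (0 : ℝ) < q := by positivity
    rw [hX, hY, ← Real.rpow_natCast, ← Real.rpow_mul hq0.le, ← Real.rpow_add hq0]
    congr 1
    push_cast
    ring
  calc _ ≤ ((B * (E.divisors.card * E.divisors.card) * (3 * E.divisors.card) * 2 : ℕ) : ℝ) := by
        exact_mod_cast hcount
    _ = 6 * B * (E.divisors.card : ℝ) ^ 3 := by push_cast; ring
    _ ≤ 6 * (C₂ * (16 * g : ℕ) * Y) * (C₁ * X) ^ 3 := by gcongr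
    _ = 96 * C₂ * C₁ ^ 3 * (Y * X ^ 3) * g := by push_cast; ring
    _ = _ := by rw [hXY]
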